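/- arXiv:1808.06568 — 4 statements merged into one kernel-verified Lean document; each statement's English description precedes it below -/
import Mathlib

section
/- Let P be a poset equipped with the Alexandrov topology in which the open sets are exactly the upward-closed subsets (cosieves) of P, and let C be a category with all small limits. Let j : P → Op(P)ᵒᵖ be the full embedding sending x to the principal open set P_{≥x}. If a presheaf F : Op(P)ᵒᵖ → C is a right Kan extension of its restriction F ∘ j along j, then F is a sheaf: for every open U and every covering sieve J on U (a sieve of open subsets of U whose union is U), the canonical map F(U) → lim_{V ∈ J} F(V) is an isomorphism. -/
/-!
STATEMENT 3: Let `P` be a poset with the Alexandrov topology whose open sets are exactly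
the upper sets (cosieves), and `C` a category with all small limits. Let
`j : P ⥤ Op(P)ᵒᵖ` be the full embedding `x ↦ P_{≥x}`. If a presheaf
`F : Op(P)ᵒᵖ ⥤ C` is a right Kan extension of its restriction `F ∘ j` along `j`, then
`F` is a sheaf (for the Grothendieck topology on `Op(P)` whose covering sieves on `U`
are the sieves of opens whose union is `U`).
-/

open CategoryTheory TopologicalSpace

universe u v w

/-- The Alexandrov topology on a poset: the open sets are exactly the upper sets
(cosieves). -/
instance alexandrov (P : Type u) [PartialOrder P] : TopologicalSpace P where
  IsOpen s := IsUpperSet s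
  isOpen_univ := isUpperSet_univ
  isOpen_inter _ _ hs ht := hs.inter ht
  isOpen_sUnion _ h := isUpperSet_sUnion h

/-- The full embedding `j : P ⥤ Op(P)ᵒᵖ` sending `x` to the principal open `P_{≥x}`. -/
def jEmbed (P : Type u) [PartialOrder P] : P ⥤ (Opens P)ᵒᵖ where
  obj x := Opposite.op ⟨Set.Ici x, isUpperSet_Ici x⟩
  map {x y} f := (homOfLE (fun z hz => (leOfHom f).trans hz :
    (⟨Set.Ici y, isUpperSet_Ici y⟩ : Opens P) ≤ ⟨Set.Ici x, isUpperSet_Ici x⟩)).op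
  map_id _ := rfl
  map_comp _ _ := rfl

/-!
A covering sieve on `P_{≥x}` has a member containing `x`; being an upper set, that member contains
all of `P_{≥x}`, so the sieve is maximal. Hence `x ↦ P_{≥x}` is a cocontinuous functor to the site
`Op(P)` from `Pᵒᵖ` with the trivial topology. Every presheaf is a sheaf for the trivial topology,
and pointwise right Kan extension along a cocontinuous functor preserves sheaves.
-/

section KanExtension

variable {B C D A : Type*} [Category* B] [Category* C] [Category* D] [Category* A]

lemma hasPointwiseRightKanExtension_comp_of_isEquivalence (E : B ⥤ C) [E.IsEquivalence]
    (L : C ⥤ D) (H : C ⥤ A) [L.HasPointwiseRightKanExtension H] :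
    (E ⋙ L).HasPointwiseRightKanExtension (E ⋙ H) := fun Y ↦
  Limits.hasLimit_equivalence_comp (F := StructuredArrow.proj Y L ⋙ H)
    (StructuredArrow.pre Y E L).asEquivalence

theorem isSheaf_of_isRightKanExtension_of_isCocontinuous {J : GrothendieckTopology C}
    {K : GrothendieckTopology D} (G : C ⥤ D) [G.IsCocontinuous J K]
    {F : Dᵒᵖ ⥤ A} {H : Cᵒᵖ ⥤ A} (hH : Presheaf.IsSheaf J H)
    (α : G.op ⋙ F ⟶ H) [F.IsRightKanExtension α] [G.op.HasPointwiseRightKanExtension H] :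
    Presheaf.IsSheaf K F := by
  rw [Presheaf.isSheaf_iff_multifork]
  exact fun U S ↦ ⟨RanIsSheafOfIsCocontinuous.isLimitMultifork hH
    (Functor.isPointwiseRightKanExtensionOfIsRightKanExtension F α) S⟩

theorem isSheaf_of_isRightKanExtension_of_isCocontinuous_bot {K : GrothendieckTopology D}
    (L : C ⥤ Dᵒᵖ) [L.leftOp.IsCocontinuous ⊥ K] {F : Dᵒᵖ ⥤ A} {H : C ⥤ A}
    (α : L ⋙ F ⟶ H) [F.IsRightKanExtension α] [L.HasPointwiseRightKanExtension H] :
    Presheaf.IsSheaf K F := by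
  -- `L.leftOp.op` and `unopUnop C ⋙ L` agree definitionally.
  have : L.leftOp.op.HasPointwiseRightKanExtension (unopUnop C ⋙ H) :=
    hasPointwiseRightKanExtension_comp_of_isEquivalence (unopUnop C) L H
  let β : L.leftOp.op ⋙ F ⟶ unopUnop C ⋙ H :=
    (Functor.associator (unopUnop C) L F).hom ≫ Functor.whiskerLeft (unopUnop C) α
  have : F.IsRightKanExtension β :=
    (Functor.isRightKanExtension_iff_precomp F (unopUnop C) α).1 inferInstance
  exact isSheaf_of_isRightKanExtension_of_isCocontinuous L.leftOp (Presheaf.isSheaf_bot _) β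

end KanExtension

section UpperSetTopology

open Alexandrov

variable {X : Type*} [TopologicalSpace X] [Preorder X] [Topology.IsUpperSet X]

lemma eq_top_of_mem_grothendieckTopology_principalOpen {x : X} {S : Sieve (principalOpen x)}
    (hS : S ∈ Opens.grothendieckTopology X (principalOpen x)) : S = ⊤ := by
  obtain ⟨V, i, hi, hxV⟩ := hS x (self_mem_principalOpen x)
  have hle : principalOpen x ≤ V := (principalOpen_le_iff V).2 hxV
  exact Sieve.id_mem_iff_eq_top.1 (S.downward_closed hi hle.hom)

instance isCocontinuous_principals_leftOp :
    (principals X).leftOp.IsCocontinuous ⊥ (Opens.grothendieckTopology X) where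
  cover_lift hS := by
    obtain rfl := eq_top_of_mem_grothendieckTopology_principalOpen hS
    exact GrothendieckTopology.bot_covering.2 (Sieve.functorPullback_top _ _)

theorem stmt3_general {A : Type*} [Category* A] {F : (Opens X)ᵒᵖ ⥤ A} {H : X ⥤ A}
    (α : principals X ⋙ F ⟶ H) [F.IsRightKanExtension α]
    [(principals X).HasPointwiseRightKanExtension H] :
    Presheaf.IsSheaf (Opens.grothendieckTopology X) F :=
  isSheaf_of_isRightKanExtension_of_isCocontinuous_bot (principals X) α

end UpperSetTopology

theorem stmt3 (P : Type u) [PartialOrder P]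
    (C : Type v) [Category.{w} C] [Limits.HasLimitsOfSize.{u, u} C]
    (F : (Opens P)ᵒᵖ ⥤ C)
    (hF : F.IsRightKanExtension (𝟙 (jEmbed P ⋙ F))) :
    Presheaf.IsSheaf (Opens.grothendieckTopology P) F := by
  have : Topology.IsUpperSet P := ⟨rfl⟩
  have : F.IsRightKanExtension (𝟙 (Alexandrov.principals P ⋙ F)) := hF
  exact stmt3_general (𝟙 (Alexandrov.principals P ⋙ F))
end

section
/- Let K be an abstract simplicial complex with poset of simplices P, let σ ∈ K, and let L = {τ ∈ K : σ ∪ τ ∈ K and ¬(σ ⊆ τ)} be the link of σ. For a nonempty proper subset s ⊊ σ, let A_s = {τ ∈ L : τ ∩ σ ⊆ s} and let B_s = {τ ∈ A_s : s ⊆ τ}, each ordered by inclusion. Then the map r_s : A_s → B_s given by r_s(τ) = τ ∪ s is a well-defined monotone map which, as a functor, is left adjoint to the inclusion B_s ↪ A_s; consequently the inclusion functor B_s ↪ A_s is final. Moreover B_s has a least element, namely s itself. -/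
/-!
STATEMENT 8: For an abstract simplicial complex `K` with poset of simplices `P`, a face
`σ ∈ K`, the link `L = {τ ∈ K : σ ∪ τ ∈ K ∧ ¬(σ ⊆ τ)}` of `σ`, and a nonempty proper
subset `s ⊊ σ`, with `A_s = {τ ∈ L : τ ∩ σ ⊆ s}` and `B_s = {τ ∈ A_s : s ⊆ τ}`:
the map `r_s(τ) = τ ∪ s` is a well-defined monotone map `A_s → B_s` which, as a functor,
is left adjoint to the inclusion `B_s ↪ A_s` (for posets: a Galois connection);
consequently the inclusion functor `B_s ↪ A_s` is final. Moreover `B_s` has a least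
element, namely `s` itself.
-/

open CategoryTheory

universe u

/-- The poset of simplices of an abstract simplicial complex `K`: faces ordered by inclusion. -/
abbrev SimplexPoset {V : Type u} (K : Set (Finset V)) : Type u := {τ : Finset V // τ ∈ K}

/-- The link of a face `σ`, as a subset of the poset of simplices. -/
def linkSet {V : Type u} [DecidableEq V] (K : Set (Finset V)) (σ : Finset V) :
    Set (SimplexPoset K) :=
  {τ | σ ∪ (τ : Finset V) ∈ K ∧ ¬ σ ⊆ (τ : Finset V)}

/-- The subset `A_s = {τ ∈ L : τ ∩ σ ⊆ s}` of the poset of simplices. -/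
def ASet {V : Type u} [DecidableEq V] (K : Set (Finset V)) (σ s : Finset V) :
    Set (SimplexPoset K) :=
  {τ | τ ∈ linkSet K σ ∧ (τ : Finset V) ∩ σ ⊆ s}

/-- The subset `B_s = {τ ∈ A_s : s ⊆ τ}`, the cosieve in `A_s` generated by `s`. -/
def BSet {V : Type u} [DecidableEq V] (K : Set (Finset V)) (σ s : Finset V) :
    Set (SimplexPoset K) :=
  {τ | τ ∈ ASet K σ s ∧ s ⊆ (τ : Finset V)}

section

variable {V : Type u} [DecidableEq V] {K : Set (Finset V)} {σ s : Finset V}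

theorem BSet_subset_ASet : BSet K σ s ⊆ ASet K σ s := fun _ hτ => hτ.1

theorem mem_BSet_iff_inter_eq (hs : s ⊂ σ) {τ : SimplexPoset K} :
    τ ∈ BSet K σ s ↔ σ ∪ (τ : Finset V) ∈ K ∧ (τ : Finset V) ∩ σ = s := by
  constructor
  · rintro ⟨⟨⟨hστ, -⟩, hτs⟩, hsτ⟩
    exact ⟨hστ, hτs.antisymm (Finset.subset_inter hsτ hs.subset)⟩
  · rintro ⟨hστ, hτs⟩
    have hσ_not_subset : ¬σ ⊆ (τ : Finset V) := fun hσ =>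
      hs.ne (hτs.symm.trans (Finset.inter_eq_right.mpr hσ))
    exact ⟨⟨⟨hστ, hσ_not_subset⟩, hτs.subset⟩, hτs ▸ Finset.inter_subset_left⟩

theorem isLeast_BSet (hσ : σ ∈ K) (hs : s ⊂ σ) (hsK : s ∈ K) :
    IsLeast (BSet K σ s) ⟨s, hsK⟩ := by
  refine ⟨(mem_BSet_iff_inter_eq hs).mpr ⟨?_, Finset.inter_eq_left.mpr hs.subset⟩,
    fun _ hτ => hτ.2⟩
  rwa [Finset.union_eq_left.mpr hs.subset]

theorem union_mem_of_mem_ASet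
    (hdc : ∀ t ∈ K, ∀ t' : Finset V, t' ⊆ t → t'.Nonempty → t' ∈ K)
    (hs : s ⊆ σ) (hsne : s.Nonempty) {τ : SimplexPoset K} (hτ : τ ∈ ASet K σ s) :
    (τ : Finset V) ∪ s ∈ K :=
  hdc _ hτ.1.1 _ (Finset.union_subset Finset.subset_union_right
    (hs.trans Finset.subset_union_left)) (hsne.mono Finset.subset_union_right)

theorem mem_BSet_of_coe_eq_union (hs : s ⊂ σ) {τ ρ : SimplexPoset K} (hτ : τ ∈ ASet K σ s)
    (hρ : (ρ : Finset V) = (τ : Finset V) ∪ s) : ρ ∈ BSet K σ s := by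
  rw [mem_BSet_iff_inter_eq hs, hρ]
  constructor
  · have hunion : σ ∪ ((τ : Finset V) ∪ s) = σ ∪ τ := by
      rw [Finset.union_left_comm, Finset.union_eq_left.mpr hs.subset, Finset.union_comm]
    exact hunion ▸ hτ.1.1
  · calc
      ((τ : Finset V) ∪ s) ∩ σ = (τ : Finset V) ∩ σ ∪ s ∩ σ := Finset.union_inter_distrib_right ..
      _ = (τ : Finset V) ∩ σ ∪ s := by rw [Finset.inter_eq_left.mpr hs.subset]
      _ = s := Finset.union_eq_right.mpr hτ.2

/-- The map `r_s : A_s → B_s`, `τ ↦ τ ∪ s`, left adjoint to the inclusion `B_s ↪ A_s`. -/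
def unionFace (hdc : ∀ t ∈ K, ∀ t' : Finset V, t' ⊆ t → t'.Nonempty → t' ∈ K)
    (hs : s ⊂ σ) (hsne : s.Nonempty) (τ : ASet K σ s) : BSet K σ s :=
  ⟨⟨(τ : SimplexPoset K) ∪ s, union_mem_of_mem_ASet hdc hs.subset hsne τ.2⟩,
    mem_BSet_of_coe_eq_union hs τ.2 rfl⟩

theorem gc_unionFace_inclusion
    (hdc : ∀ t ∈ K, ∀ t' : Finset V, t' ⊆ t → t'.Nonempty → t' ∈ K)
    (hs : s ⊂ σ) (hsne : s.Nonempty) :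
    GaloisConnection (unionFace hdc hs hsne) (Set.inclusion BSet_subset_ASet) :=
  fun _ ρ => Finset.union_subset_iff.trans (and_iff_left ρ.2.2)

end

theorem stmt8 (V : Type u) [DecidableEq V] (K : Set (Finset V))
    (hne : ∀ t ∈ K, t.Nonempty)
    (hdc : ∀ t ∈ K, ∀ t' : Finset V, t' ⊆ t → t'.Nonempty → t' ∈ K)
    (σ : Finset V) (hσ : σ ∈ K)
    (s : Finset V) (hs : s ⊆ σ) (hsne : s.Nonempty) (hsproper : s ≠ σ) :
    ∃ h : BSet K σ s ⊆ ASet (V := V) K σ s,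
      (∃ r : ↥(ASet (V := V) K σ s) → ↥(BSet K σ s),
        (∀ τ : ↥(ASet (V := V) K σ s),
          ((r τ : SimplexPoset K) : Finset V) = ((τ : SimplexPoset K) : Finset V) ∪ s) ∧
        Monotone r ∧
        GaloisConnection r (Set.inclusion h)) ∧
      Functor.Final
        ((show Monotone (Set.inclusion h) from fun _ _ hle => hle).functor) ∧
      (∃ m : SimplexPoset K, (m : Finset V) = s ∧ IsLeast (BSet K σ s) m) := by
  have hss : s ⊂ σ := hs.ssubset_of_ne hsproper
  have gc := gc_unionFace_inclusion hdc hss hsne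
  exact ⟨BSet_subset_ASet,
    ⟨unionFace hdc hss hsne, fun _ => rfl, gc.monotone_l, gc⟩,
    Functor.final_of_adjunction gc.adjunction,
    ⟨s, hdc σ hσ s hs hsne⟩, rfl, isLeast_BSet hσ hss _⟩
end

section
/- Fix n ≥ 0 and let Δ_inj denote the category whose objects are the finite nonempty linearly ordered sets [m] = {0 < 1 < ... < m} and whose morphisms are the strictly monotone (injective order-preserving) maps. Let D_n be the category whose objects are pairs ([m], i) with i : [n] → [m] a strictly monotone map and m > n, and whose morphisms ([m], i) → ([m'], j) are strictly monotone maps f : [m] → [m'] with f ∘ i = j. Given a strictly monotone i : [n] → [m], let i^c : [m−n−1] → [m] be the strictly monotone map whose image is the complement of the image of i. Define γ_n : D_n → Δ_inj by γ_n([m], i) = [m−n−1], and on a morphism f : ([m], i) → ([m'], j), γ_n(f) is the unique strictly monotone map [m−n−1] → [m'−n−1] satisfying f ∘ i^c = j^c ∘ γ_n(f). Then γ_n is a well-defined functor and is a Grothendieck fibration: every morphism g : [k] → [k'] in Δ_inj and every object ([m'], j) of D_n with γ_n([m'], j) = [k'] admits a cartesian lift f : ([m], i) → ([m'], j) with γ_n(f)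 = g. -/
/-!
STATEMENT 12: Fix `n ≥ 0`. Let `Δ_inj` be the category of finite nonempty linear orders
`[m] = {0 < ... < m}` with strictly monotone maps, and let `D_n` be the category of pairs
`([m], i)` with `i : [n] → [m]` strictly monotone and `m > n`, with morphisms
`f : ([m], i) → ([m'], j)` the strictly monotone `f` with `f ∘ i = j`.  For strictly
monotone `i : [n] → [m]` let `i^c : [m−n−1] → [m]` be the strictly monotone map whose
image is the complement of the image of `i`.  Define `γ_n : D_n → Δ_inj` on objects by
`γ_n([m], i) = [m−n−1]` and on morphisms by the characterizing equation
`f ∘ i^c = j^c ∘ γ_n(f)`.  Then `γ_n` is a well-defined functor and a Grothendieck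
fibration: every `g : [k] → [k']` in `Δ_inj` and every object `([m'], j)` over `[k']`
admits a cartesian lift `f` with `γ_n(f) = g`.
-/

open CategoryTheory

/-- The category `Δ_inj`: objects are the finite nonempty linear orders
`[m] = {0 < 1 < ... < m}` (encoded by `m : ℕ`), morphisms `[a] → [b]` are the strictly
monotone (= injective order-preserving) maps `Fin (a+1) → Fin (b+1)`. -/
structure DeltaInj where
  n : ℕ

instance : Category DeltaInj where
  Hom a b := {f : Fin (a.n + 1) → Fin (b.n + 1) // StrictMono f}
  id a := ⟨id, strictMono_id⟩
  comp f g := ⟨g.1 ∘ f.1, g.2.comp f.2⟩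
  id_comp f := Subtype.ext rfl
  comp_id f := Subtype.ext rfl
  assoc f g h := Subtype.ext rfl

/-- The category `D_n` of pairs `([m], i)` with `m > n` and `i : [n] → [m]` strictly
monotone; morphisms `([m], i) → ([m'], j)` are strictly monotone maps `f : [m] → [m']`
with `f ∘ i = j`. -/
structure DObj (n : ℕ) where
  m : ℕ
  hm : n < m
  i : Fin (n + 1) → Fin (m + 1)
  hi : StrictMono i

instance (n : ℕ) : Category (DObj n) where
  Hom X Y := {f : Fin (X.m + 1) → Fin (Y.m + 1) // StrictMono f ∧ f ∘ X.i = Y.i}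
  id X := ⟨id, strictMono_id, rfl⟩
  comp {X Y Z} f g := ⟨g.1 ∘ f.1, (g.2.1.comp f.2.1), by
    rw [Function.comp_assoc, f.2.2, g.2.2]⟩
  id_comp f := Subtype.ext rfl
  comp_id f := Subtype.ext rfl
  assoc f g h := Subtype.ext rfl

/-- The complementary map `i^c : [m−n−1] → [m]` of an injective map `i : [n] → [m]`:
the unique strictly monotone map whose image is the complement of the image of `i`
(note `Fin (m - n) = Fin ((m - n - 1) + 1)` when `n < m`). -/
def complMap {n m : ℕ} (i : Fin (n + 1) → Fin (m + 1)) (hi : Function.Injective i) :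
    Fin (m - n) → Fin (m + 1) :=
  fun x => ((Finset.univ.image i)ᶜ.orderIsoOfFin (k := m - n)
    (by
      rw [Finset.card_compl, Finset.card_image_of_injective _ hi]
      simp [Nat.succ_sub_succ]) x : Fin (m + 1))

/-- A morphism `f : e' → e` is `p`-cartesian if for every `f' : e'' → e` and every
factorization `p(f') = p(f) ∘ h` in the base, there is a unique lift `h̃ : e'' → e'`
of `h` with `f ∘ h̃ = f'`. -/
def IsCartesianMorph {E : Type*} {B : Type*} [Category E] [Category B] (p : E ⥤ B)
    {e' e : E} (f : e' ⟶ e) : Prop :=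
  ∀ {e'' : E} (f' : e'' ⟶ e) (h : p.obj e'' ⟶ p.obj e'),
    p.map f' = h ≫ p.map f →
      ∃! ht : e'' ⟶ e', p.map ht = h ∧ ht ≫ f = f'

/-- `p` is a Grothendieck fibration if every morphism of the base into the image of an
object admits a cartesian lift with that target. -/
def IsGrothendieckFibration {E : Type*} {B : Type*} [Category E] [Category B]
    (p : E ⥤ B) : Prop :=
  ∀ (e : E) (b : B) (g : b ⟶ p.obj e),
    ∃ (e' : E) (f : e' ⟶ e) (hb : p.obj e' = b),
      IsCartesianMorph p f ∧ p.map f = eqToHom hb ≫ g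

/-!
A morphism `f : X ⟶ Y` of `D_n` has range `range Y.i ∪ Y^c (range (γ f))`, and since morphisms are
injective, `f' : Z ⟶ Y` factors through `f` as soon as its range lies in that of `f`. Hence a
factorization of `γ f'` through `γ f` already forces one of `f'` through `f`, and every morphism of
`D_n` is `γ`-cartesian. The same formula dictates the lift of `g : [k] → γ e`: it is the increasing
enumeration of the `n + k + 2` elements of `range e.i ∪ e^c (range g)`.
-/

lemma exists_strictMono_comp_eq {α β γ : Type*} [LinearOrder α] [Preorder β] [Preorder γ]
    {f : α → γ} {u : β → γ} (hf : StrictMono f) (hu : StrictMono u)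
    (h : Set.range u ⊆ Set.range f) : ∃ v : β → α, StrictMono v ∧ f ∘ v = u := by
  obtain ⟨v, rfl⟩ := Set.range_subset_range_iff_exists_comp.1 h
  exact ⟨v, fun _ _ hxy => hf.lt_iff_lt.1 (hu hxy), rfl⟩

lemma exists_strictMono_range_eq_union {α : Type*} [LinearOrder α] {a b : ℕ}
    {i : Fin a → α} {c : Fin b → α} (hi : Function.Injective i) (hc : Function.Injective c)
    (hd : Disjoint (Set.range i) (Set.range c)) :
    ∃ F : Fin (a + b) → α, StrictMono F ∧ Set.range F = Set.range i ∪ Set.range c := by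
  let s : Finset α := Finset.univ.image i ∪ Finset.univ.image c
  have hs : (s : Set α) = Set.range i ∪ Set.range c := by simp [s]
  have hcard : s.card = a + b := by
    rw [← Set.ncard_coe_finset, hs, Set.ncard_union_eq hd, Set.ncard_range_of_injective hi,
      Set.ncard_range_of_injective hc, Nat.card_fin, Nat.card_fin]
  exact ⟨s.orderEmbOfFin hcard, (s.orderEmbOfFin hcard).strictMono, by simp [hs]⟩

lemma range_eq_compl_range_of_comp {α β ι κ : Type*} {F : β → α} {i : ι → β} {c : κ → β}
    (hF : Function.Injective F) (hd : Disjoint (Set.range (F ∘ i)) (Set.range (F ∘ c)))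
    (hr : Set.range F = Set.range (F ∘ i) ∪ Set.range (F ∘ c)) :
    Set.range c = (Set.range i)ᶜ := by
  rw [Set.range_comp, Set.range_comp] at hd hr
  rw [← Set.image_union, ← Set.image_univ] at hr
  have hic : IsCompl (Set.range i) (Set.range c) :=
    ⟨(Set.disjoint_image_iff hF).1 hd,
      codisjoint_iff.2 (hF.image_injective hr).symm⟩
  exact hic.compl_eq.symm

lemma isCartesianMorph_of_mono {E B : Type*} [Category E] [Category B] (p : E ⥤ B) {e' e : E}
    (f : e' ⟶ e) [Mono f] [Mono (p.map f)]
    (hfac : ∀ {e'' : E} (f' : e'' ⟶ e) (h : p.obj e'' ⟶ p.obj e'),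
      p.map f' = h ≫ p.map f → ∃ t : e'' ⟶ e', t ≫ f = f') :
    IsCartesianMorph p f := by
  intro e'' f' h hh
  obtain ⟨t, rfl⟩ := hfac f' h hh
  refine ⟨t, ⟨?_, rfl⟩, fun t' ht' => (cancel_mono f).1 ht'.2⟩
  rwa [p.map_comp, cancel_mono] at hh

section complMap

variable {n m : ℕ} (i : Fin (n + 1) → Fin (m + 1)) (hi : Function.Injective i)

lemma exists_complMap_eq_orderEmbOfFin :
    ∃ h : (Finset.univ.image i)ᶜ.card = m - n,
      complMap i hi = (Finset.univ.image i)ᶜ.orderEmbOfFin h := by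
  refine ⟨?_, rfl⟩
  rw [Finset.card_compl, Finset.card_image_of_injective _ hi, Fintype.card_fin, Finset.card_fin,
    Nat.add_sub_add_right]

lemma complMap_strictMono : StrictMono (complMap i hi) := by
  obtain ⟨hcard, heq⟩ := exists_complMap_eq_orderEmbOfFin i hi
  exact heq ▸ ((Finset.univ.image i)ᶜ.orderEmbOfFin hcard).strictMono

lemma range_complMap : Set.range (complMap i hi) = (Set.range i)ᶜ := by
  obtain ⟨hcard, heq⟩ := exists_complMap_eq_orderEmbOfFin i hi
  rw [heq, Finset.range_orderEmbOfFin, Finset.coe_compl, Finset.coe_image, Finset.coe_univ,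
    Set.image_univ]

end complMap

instance DeltaInj.mono {a b : DeltaInj} (f : a ⟶ b) : Mono f where
  right_cancellation _ _ h :=
    Subtype.ext (f.2.injective.comp_left (congrArg Subtype.val h))

namespace DObj

variable {n : ℕ}

instance mono {X Y : DObj n} (f : X ⟶ Y) : Mono f where
  right_cancellation _ _ h :=
    Subtype.ext (f.2.1.injective.comp_left (congrArg Subtype.val h))

lemma exists_comp_eq_of_range_subset {X Y Z : DObj n} (f : Y ⟶ Z) (f' : X ⟶ Z)
    (h : Set.range f'.1 ⊆ Set.range f.1) : ∃ t : X ⟶ Y, t ≫ f = f' := by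
  obtain ⟨v, hv, hfv⟩ := exists_strictMono_comp_eq f.2.1 f'.2.1 h
  have hvi : v ∘ X.i = Y.i := f.2.1.injective.comp_left <|
    calc f.1 ∘ v ∘ X.i = f'.1 ∘ X.i := congrArg (· ∘ X.i) hfv
      _ = Z.i := f'.2.2
      _ = f.1 ∘ Y.i := f.2.2.symm
  exact ⟨⟨v, hv, hvi⟩, Subtype.ext hfv⟩

lemma sub_sub_one_add_one (X : DObj n) : X.m - n - 1 + 1 = X.m - n :=
  Nat.sub_add_cancel (Nat.sub_pos_of_lt X.hm)

/-- The complementary map `i^c` of `X = ([m], i)`, reindexed along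
`Fin (m - n - 1 + 1) = Fin (m - n)` so that its source is the ordinal underlying the object
`[m - n - 1]` of `Δ_inj`. -/
def compl (X : DObj n) : Fin (X.m - n - 1 + 1) → Fin (X.m + 1) :=
  complMap X.i X.hi.injective ∘ Fin.cast X.sub_sub_one_add_one

lemma compl_strictMono (X : DObj n) : StrictMono X.compl :=
  (complMap_strictMono _ _).comp (Fin.cast_strictMono _)

lemma range_compl (X : DObj n) : Set.range X.compl = (Set.range X.i)ᶜ :=
  ((finCongr X.sub_sub_one_add_one).surjective.range_comp _).trans (range_complMap _ _)

lemma exists_compl_comp_eq {X Y : DObj n} (f : X ⟶ Y) :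
    ∃ g : Fin (X.m - n - 1 + 1) → Fin (Y.m - n - 1 + 1),
      StrictMono g ∧ Y.compl ∘ g = f.1 ∘ X.compl := by
  refine exists_strictMono_comp_eq Y.compl_strictMono (f.2.1.comp X.compl_strictMono) ?_
  have hi : f.1 '' Set.range X.i = Set.range Y.i := by rw [← Set.range_comp, f.2.2]
  rw [Set.range_comp, Y.range_compl, X.range_compl, ← hi]
  exact Set.image_compl_subset f.2.1.injective

/-- The map `[m - n - 1] → [m' - n - 1]` that a morphism `f : ([m], i) ⟶ ([m'], j)` of `D_n`
induces on complements, i.e. the action of `γ_n` on morphisms. It is obtained by choice from the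
equation `j^c ∘ g = f ∘ i^c`, which determines it (`complHom_eq_of_compl_comp_eq`). -/
noncomputable def complHom {X Y : DObj n} (f : X ⟶ Y) :
    Fin (X.m - n - 1 + 1) → Fin (Y.m - n - 1 + 1) :=
  (exists_compl_comp_eq f).choose

lemma complHom_strictMono {X Y : DObj n} (f : X ⟶ Y) : StrictMono (complHom f) :=
  (exists_compl_comp_eq f).choose_spec.1

lemma compl_comp_complHom {X Y : DObj n} (f : X ⟶ Y) :
    Y.compl ∘ complHom f = f.1 ∘ X.compl :=
  (exists_compl_comp_eq f).choose_spec.2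

lemma complHom_eq_of_compl_comp_eq {X Y : DObj n} {f : X ⟶ Y}
    {g : Fin (X.m - n - 1 + 1) → Fin (Y.m - n - 1 + 1)} (h : Y.compl ∘ g = f.1 ∘ X.compl) :
    complHom f = g :=
  Y.compl_strictMono.injective.comp_left ((compl_comp_complHom f).trans h.symm)

lemma complHom_id (X : DObj n) : complHom (𝟙 X) = id :=
  complHom_eq_of_compl_comp_eq rfl

lemma complHom_comp {X Y Z : DObj n} (f : X ⟶ Y) (g : Y ⟶ Z) :
    complHom (f ≫ g) = complHom g ∘ complHom f := by
  refine complHom_eq_of_compl_comp_eq ?_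
  calc Z.compl ∘ complHom g ∘ complHom f
      = g.1 ∘ Y.compl ∘ complHom f := congrArg (· ∘ complHom f) (compl_comp_complHom g)
    _ = (f ≫ g).1 ∘ X.compl := congrArg (g.1 ∘ ·) (compl_comp_complHom f)

lemma range_hom_eq_union {X Y : DObj n} (f : X ⟶ Y) :
    Set.range f.1 = Set.range Y.i ∪ Y.compl '' Set.range (complHom f) :=
  calc Set.range f.1 = f.1 '' (Set.range X.i ∪ Set.range X.compl) := by
        rw [X.range_compl, Set.union_compl_self, Set.image_univ]
    _ = Set.range (f.1 ∘ X.i) ∪ Set.range (f.1 ∘ X.compl) := by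
        rw [Set.image_union, Set.range_comp, Set.range_comp]
    _ = Set.range Y.i ∪ Y.compl '' Set.range (complHom f) := by
        rw [f.2.2, ← compl_comp_complHom, Set.range_comp Y.compl]

end DObj

section gamma

open DObj

/-- The functor `γ_n : D_n ⥤ Δ_inj` sending `([m], i)` to `[m - n - 1]`. -/
noncomputable def gamma (n : ℕ) : DObj n ⥤ DeltaInj where
  obj X := ⟨X.m - n - 1⟩
  map f := ⟨complHom f, complHom_strictMono f⟩
  map_id X := Subtype.ext (complHom_id X)
  map_comp f g := Subtype.ext (complHom_comp f g)

variable {n : ℕ}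

lemma isCartesianMorph_gamma {e' e : DObj n} (f : e' ⟶ e) : IsCartesianMorph (gamma n) f := by
  refine isCartesianMorph_of_mono _ f fun f' h hh => exists_comp_eq_of_range_subset f f' ?_
  have hcomp : complHom f' = complHom f ∘ h.1 := congrArg Subtype.val hh
  have hsub : Set.range (complHom f') ⊆ Set.range (complHom f) :=
    hcomp ▸ Set.range_comp_subset_range h.1 (complHom f)
  rw [range_hom_eq_union, range_hom_eq_union]
  exact Set.union_subset_union_right _ (Set.image_mono hsub)

lemma exists_comp_eqToHom_eq_compl {X : DObj n} {b : DeltaInj}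
    {c : Fin (b.n + 1) → Fin (X.m + 1)} (hc : StrictMono c)
    (hr : Set.range c = (Set.range X.i)ᶜ) :
    ∃ hb : (gamma n).obj X = b, c ∘ (eqToHom hb).1 = X.compl := by
  have hr' : Set.range X.compl = Set.range c := X.range_compl.trans hr.symm
  have hcard : X.m - n - 1 + 1 = b.n + 1 := by
    simpa only [Set.ncard_range_of_injective X.compl_strictMono.injective,
      Set.ncard_range_of_injective hc.injective, Nat.card_fin] using congrArg Set.ncard hr'
  obtain rfl : (gamma n).obj X = b := congrArg DeltaInj.mk (Nat.succ_injective hcard)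
  exact ⟨rfl, ((X.compl_strictMono.range_inj hc).1 hr').symm⟩

lemma exists_gamma_map_eq (e : DObj n) (b : DeltaInj) (g : b ⟶ (gamma n).obj e) :
    ∃ (e' : DObj n) (f : e' ⟶ e) (hb : (gamma n).obj e' = b),
      (gamma n).map f = eqToHom hb ≫ g := by
  have hcg : StrictMono (e.compl ∘ g.1) := e.compl_strictMono.comp g.2
  have hd : Disjoint (Set.range e.i) (Set.range (e.compl ∘ g.1)) := by
    refine Set.disjoint_left.2 fun y hy hy' => ?_
    exact (e.range_compl ▸ Set.range_comp_subset_range g.1 e.compl hy') hy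
  obtain ⟨F, hF, hFr⟩ := exists_strictMono_range_eq_union e.hi.injective hcg.injective hd
  obtain ⟨i, hi, hFi⟩ := exists_strictMono_comp_eq hF e.hi (hFr ▸ Set.subset_union_left)
  obtain ⟨c, hc, hFc⟩ := exists_strictMono_comp_eq hF hcg (hFr ▸ Set.subset_union_right)
  rw [← hFi, ← hFc] at hd hFr
  let e' : DObj n := ⟨n + 1 + b.n, by omega, i, hi⟩
  obtain ⟨hb, hcb⟩ := exists_comp_eqToHom_eq_compl (X := e') hc
    (range_eq_compl_range_of_comp hF.injective hd hFr)
  refine ⟨e', ⟨F, hF, hFi⟩, hb, Subtype.ext (complHom_eq_of_compl_comp_eq ?_)⟩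
  exact (congrArg (· ∘ (eqToHom hb).1) hFc.symm).trans (congrArg (F ∘ ·) hcb)

end gamma

theorem stmt12 (n : ℕ) :
    ∃ γ : DObj n ⥤ DeltaInj,
      ∃ hobj : ∀ X : DObj n, (γ.obj X).n = X.m - n - 1,
        (∀ (X Y : DObj n) (f : X ⟶ Y) (x : Fin (X.m - n)),
          f.1 (complMap X.i X.hi.injective x) =
            complMap Y.i Y.hi.injective
              (Fin.cast (by have := Y.hm; rw [hobj Y]; omega)
                ((γ.map f).1
                  (Fin.cast (by have := X.hm; rw [hobj X]; omega) x)))) ∧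
        IsGrothendieckFibration γ := by
  refine ⟨gamma n, fun _ => rfl, fun X Y f x => ?_, fun e b g => ?_⟩
  · exact (congrFun (DObj.compl_comp_complHom f) (Fin.cast X.sub_sub_one_add_one.symm x)).symm
  · obtain ⟨e', f, hb, hf⟩ := exists_gamma_map_eq e b g
    exact ⟨e', f, hb, isCartesianMorph_gamma f, hf⟩
end

section
/- Let B be a small category and X : Bᵒᵖ → Type a presheaf on B. Let E be the category of elements of X: objects are pairs (b, x) with b ∈ B and x ∈ X(b), and morphisms (b, x) → (b', x') are morphisms g : b → b' in B with X(g)(x') = x. Let A be a category with all small limits and F : E → A a functor. Define G : B → A by G(b) = ∏_{x ∈ X(b)} F(b, x), where for g : b → b' the map G(b) → G(b') has component at x' ∈ X(b') the projection of G(b) onto the factor indexed by X(g)(x') followed by F applied to the morphism (b, X(g)(x')) → (b', x') determined by g. Then the limit of F over E exists if and only if the limit of G over B exists, and in that case lim_E F ≅ lim_B G. -/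
/-!
STATEMENT 13: Let `B` be a small category, `X : Bᵒᵖ ⥤ Type` a presheaf, `E` the category
of elements of `X` (objects `(b, x)` with `x ∈ X(b)`; morphisms `(b,x) → (b',x')` the
`g : b → b'` with `X(g)(x') = x`), `A` a category with all small limits, and
`F : E ⥤ A`. Define `G : B ⥤ A` by `G(b) = ∏_{x ∈ X(b)} F(b, x)`, with structure map at
`g : b ⟶ b'` having component at `x'` the projection onto the factor `X(g)(x')` followed
by `F` of the morphism `(b, X(g)(x')) → (b', x')` determined by `g`. Then `lim F` exists
iff `lim G` exists, and in that case `lim F ≅ lim G`.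
-/

open CategoryTheory Limits Opposite

universe u v w

variable {B : Type u} [SmallCategory B] (X : Bᵒᵖ ⥤ Type u)

/-- The category of elements of a presheaf `X : Bᵒᵖ ⥤ Type`: objects are pairs `(b, x)`
with `x ∈ X(b)`, and morphisms `(b, x) → (b', x')` are the `g : b ⟶ b'` with
`X(g)(x') = x`. -/
structure Elem where
  base : B
  elt : X.obj (op base)

instance : Category (Elem X) where
  Hom e e' := {g : e.base ⟶ e'.base // X.map g.op e'.elt = e.elt}
  id e := ⟨𝟙 e.base, by simp⟩
  comp {e e' e''} f g := ⟨f.1 ≫ g.1, by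
    rw [op_comp, X.map_comp, types_comp_apply, g.2, f.2]⟩
  id_comp f := Subtype.ext (Category.id_comp f.1)
  comp_id f := Subtype.ext (Category.comp_id f.1)
  assoc f g h := Subtype.ext (Category.assoc f.1 g.1 h.1)

variable {A : Type v} [Category.{w} A] [HasLimitsOfSize.{u, u} A]
variable (F : Elem X ⥤ A)

private lemma pi_π_comp_map_eq {b : B} {y x' : X.obj (op b)} (h : y = x')
    {e : Elem X} (g : (⟨b, y⟩ : Elem X) ⟶ e) (g' : (⟨b, x'⟩ : Elem X) ⟶ e)
    (hg : g.1 = g'.1) :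
    Pi.π (fun x : X.obj (op b) => F.obj ⟨b, x⟩) y ≫ F.map g =
      Pi.π (fun x : X.obj (op b) => F.obj ⟨b, x⟩) x' ≫ F.map g' := by
  subst h
  obtain rfl : g = g' := Subtype.ext hg
  rfl

/-- The fiberwise-product functor `G : B ⥤ A`, `G(b) = ∏_{x ∈ X(b)} F(b, x)`. -/
noncomputable def fiberProd : B ⥤ A where
  obj b := ∏ᶜ fun x : X.obj (op b) => F.obj ⟨b, x⟩
  map {b b'} g := Pi.lift fun x' : X.obj (op b') =>
    Pi.π (fun x : X.obj (op b) => F.obj ⟨b, x⟩) (X.map g.op x') ≫ F.map ⟨g, rfl⟩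
  map_id b := by
    ext x'
    simp only [limit.lift_π, Fan.mk_pt, Fan.mk_π_app, Category.id_comp]
    refine (pi_π_comp_map_eq X F (y := X.map (𝟙 b).op x') (x' := x')
      (by simp) ⟨𝟙 b, rfl⟩ (𝟙 (⟨b, x'⟩ : Elem X)) rfl).trans ?_
    rw [CategoryTheory.Functor.map_id, Category.comp_id]
  map_comp {b b' b''} g g' := by
    ext x''
    simp only [limit.lift_π, Fan.mk_pt, Fan.mk_π_app, Category.assoc,
      limit.lift_π_assoc]
    rw [← F.map_comp]
    exact pi_π_comp_map_eq X F (y := X.map (g ≫ g').op x'')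
      (x' := X.map g.op (X.map g'.op x'')) (by simp) ⟨g ≫ g', rfl⟩
      ((⟨g, rfl⟩ : (⟨b, X.map g.op (X.map g'.op x'')⟩ : Elem X) ⟶ ⟨b', X.map g'.op x''⟩) ≫
        (⟨g', rfl⟩ : (⟨b', X.map g'.op x''⟩ : Elem X) ⟶ ⟨b'', x''⟩)) rfl

/-!
The product projections assemble into a transformation `ε : Elem.proj X ⋙ fiberProd X F ⟶ F`,
whose naturality is the defining formula for the structure maps of `fiberProd X F`. It exhibits
`fiberProd X F` as the right Kan extension of `F` along the projection `Elem.proj X`: a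
transformation `Elem.proj X ⋙ H ⟶ F` gives maps from `H(b)` to the fiberwise products, which are
natural because every morphism of `B` lifts to `Elem X` with prescribed target. Cones over a right
Kan extension are the same as cones over the original functor, so the limits agree.
-/

section RightKanExtension

variable {J K C : Type*} [Category* J] [Category* K] [Category* C]
  {L : J ⥤ K} {F : J ⥤ C} (G : K ⥤ C)

/-- The cone over `F` obtained from a cone over `G` by restricting along `L` and composing with
`α`; for a right Kan extension this inverts `Functor.coneOfIsRightKanExtension`. -/
def restrictCone (α : L ⋙ G ⟶ F) (c : Cone G) : Cone F where
  pt := c.pt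
  π := Functor.whiskerLeft L c.π ≫ α

theorem coneOfIsRightKanExtension_π_app_comp (α : L ⋙ G ⟶ F) [G.IsRightKanExtension α]
    (s : Cone F) (j : J) :
    (G.coneOfIsRightKanExtension α s).π.app (L.obj j) ≫ α.app j = s.π.app j :=
  G.liftOfIsRightKanExtension_fac_app α ((Functor.const K).obj s.pt) s.π j

/-- Restriction along a right Kan extension takes limit cones to limit cones. -/
noncomputable def isLimitRestrictCone (α : L ⋙ G ⟶ F) [G.IsRightKanExtension α]
    {c : Cone G} (hc : IsLimit c) : IsLimit (restrictCone G α c) where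
  lift s := hc.lift (G.coneOfIsRightKanExtension α s)
  fac s j :=
    calc hc.lift (G.coneOfIsRightKanExtension α s) ≫ c.π.app (L.obj j) ≫ α.app j
      _ = (G.coneOfIsRightKanExtension α s).π.app (L.obj j) ≫ α.app j := hc.fac_assoc _ _ _
      _ = s.π.app j := coneOfIsRightKanExtension_π_app_comp G α s j
  uniq s m hm := by
    have extend_π_eq : (c.extend m).π = (G.coneOfIsRightKanExtension α s).π := by
      refine G.hom_ext_of_isRightKanExtension α _ _ ?_
      ext j
      calc (m ≫ c.π.app (L.obj j)) ≫ α.app j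
        _ = s.π.app j := (Category.assoc _ _ _).trans (hm j)
        _ = (G.coneOfIsRightKanExtension α s).π.app (L.obj j) ≫ α.app j :=
          (coneOfIsRightKanExtension_π_app_comp G α s j).symm
    exact hc.uniq (G.coneOfIsRightKanExtension α s) m (NatTrans.congr_app extend_π_eq)

theorem hasLimit_iff_of_isRightKanExtension (α : L ⋙ G ⟶ F) [G.IsRightKanExtension α] :
    HasLimit F ↔ HasLimit G where
  mp _ := ⟨⟨_, G.isLimitConeOfIsRightKanExtension α (limit.isLimit F)⟩⟩
  mpr _ := ⟨⟨_, isLimitRestrictCone G α (limit.isLimit G)⟩⟩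

end RightKanExtension

namespace Elem

/-- The projection from the category of elements to the base, `(b, x) ↦ b`. -/
def proj : Elem X ⥤ B where
  obj e := e.base
  map f := f.1

variable {X}

/-- The cartesian morphism `(b, X(g)(y)) ⟶ (b', y)` over `g : b ⟶ b'`. -/
def cartesianLift {b b' : B} (g : b ⟶ b') (y : X.obj (op b')) :
    (⟨b, X.map g.op y⟩ : Elem X) ⟶ ⟨b', y⟩ :=
  ⟨g, rfl⟩

theorem hom_induction {motive : ∀ {e e' : Elem X}, (e ⟶ e') → Prop}
    (cartesianLift : ∀ {b b' : B} (g : b ⟶ b') (y : X.obj (op b')), motive (cartesianLift g y))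
    {e e' : Elem X} (f : e ⟶ e') : motive f := by
  obtain ⟨b, x⟩ := e
  obtain ⟨g, hg⟩ := f
  change b ⟶ e'.base at g
  change X.map g.op e'.elt = x at hg
  subst hg
  exact cartesianLift g e'.elt

section FiberwiseProduct

variable {C : Type*} [Category* C] {F : Elem X ⥤ C} {G : B ⥤ C}

/-- The component of `ε` at `(b, x)`, regarded as a map out of `G(b)`. -/
def component (ε : proj X ⋙ G ⟶ F) {b : B} (x : X.obj (op b)) : G.obj b ⟶ F.obj ⟨b, x⟩ :=
  ε.app ⟨b, x⟩

theorem map_comp_component (ε : proj X ⋙ G ⟶ F) {b b' : B} (g : b ⟶ b') (y : X.obj (op b')) :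
    G.map g ≫ component ε y = component ε (X.map g.op y) ≫ F.map (cartesianLift g y) :=
  ε.naturality (cartesianLift g y)

/-- The fan over the fiber of `F` at `b` formed by the components of `ε`. That all these fans are
limits says that `ε` exhibits `G` as the fiberwise product of `F`. -/
def fiberFan (ε : proj X ⋙ G ⟶ F) (b : B) : Fan fun x : X.obj (op b) => F.obj ⟨b, x⟩ :=
  Fan.mk (G.obj b) (component ε)

variable {ε : proj X ⋙ G ⟶ F} (hε : ∀ b, IsLimit (fiberFan ε b)) {H : B ⥤ C}

/-- The map `H(b) ⟶ G(b)` into the fiberwise product whose components are those of `β`. -/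
def fiberLiftApp (β : proj X ⋙ H ⟶ F) (b : B) : H.obj b ⟶ G.obj b :=
  Fan.IsLimit.lift (hε b) (component β)

theorem fiberLiftApp_comp_component (β : proj X ⋙ H ⟶ F) {b : B} (x : X.obj (op b)) :
    fiberLiftApp hε β b ≫ component ε x = component β x :=
  Fan.IsLimit.fac (hε b) (component β) x

/-- The transformation `H ⟶ G` into the fiberwise product induced by `β : proj X ⋙ H ⟶ F`. -/
def fiberLift (β : proj X ⋙ H ⟶ F) : H ⟶ G where
  app := fiberLiftApp hε β
  naturality b b' g := Fan.IsLimit.hom_ext (hε b') _ _ fun y =>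
    calc (H.map g ≫ fiberLiftApp hε β b') ≫ component ε y
      _ = H.map g ≫ component β y := by
        rw [Category.assoc, fiberLiftApp_comp_component]
      _ = component β (X.map g.op y) ≫ F.map (cartesianLift g y) :=
        map_comp_component β g y
      _ = fiberLiftApp hε β b ≫ component ε (X.map g.op y) ≫ F.map (cartesianLift g y) := by
        rw [← Category.assoc, fiberLiftApp_comp_component]
      _ = (fiberLiftApp hε β b ≫ G.map g) ≫ component ε y := by
        rw [Category.assoc, map_comp_component]

theorem whiskerLeft_fiberLift_comp (β : proj X ⋙ H ⟶ F) :
    Functor.whiskerLeft (proj X) (fiberLift hε β) ≫ ε = β := by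
  ext e
  exact fiberLiftApp_comp_component hε β e.elt

theorem eq_fiberLift {β : proj X ⋙ H ⟶ F} {γ : H ⟶ G}
    (hγ : Functor.whiskerLeft (proj X) γ ≫ ε = β) : γ = fiberLift hε β := by
  ext b
  refine Fan.IsLimit.hom_ext (hε b) _ _ fun x => ?_
  calc γ.app b ≫ component ε x
    _ = component β x := NatTrans.congr_app hγ ⟨b, x⟩
    _ = fiberLiftApp hε β b ≫ component ε x := (fiberLiftApp_comp_component hε β x).symm

theorem isRightKanExtension_of_isLimit_fiberFan (hε : ∀ b, IsLimit (fiberFan ε b)) :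
    G.IsRightKanExtension ε where
  nonempty_isUniversal := ⟨IsTerminal.ofUniqueHom
    (fun E => CostructuredArrow.homMk (fiberLift hε E.hom) (whiskerLeft_fiberLift_comp hε E.hom))
    (fun _ m => CostructuredArrow.hom_ext _ _ (eq_fiberLift hε (CostructuredArrow.w m)))⟩

end FiberwiseProduct

end Elem

/-- The projections of the products `G(b) = ∏_{x ∈ X(b)} F(b, x)`, as a transformation over the
category of elements. -/
noncomputable def fiberProdCounit : Elem.proj X ⋙ fiberProd X F ⟶ F where
  app e := Pi.π (fun x : X.obj (op e.base) => F.obj ⟨e.base, x⟩) e.elt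
  naturality _ _ f := by
    induction f using Elem.hom_induction with
    | cartesianLift g y => exact Pi.lift_π _ y

/-- The components of `fiberProdCounit` over `b` are a product fan. -/
noncomputable def isLimitFiberFanFiberProdCounit (b : B) :
    IsLimit (Elem.fiberFan (fiberProdCounit X F) b) :=
  productIsProduct fun x : X.obj (op b) => F.obj ⟨b, x⟩

theorem stmt13_general {X : Bᵒᵖ ⥤ Type u} {C : Type*} [Category* C]
    {F : Elem X ⥤ C} {G : B ⥤ C} (ε : Elem.proj X ⋙ G ⟶ F)
    (hε : ∀ b, IsLimit (Elem.fiberFan ε b)) :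
    (HasLimit F ↔ HasLimit G) ∧
    ∀ [HasLimit F] [HasLimit G], Nonempty (limit F ≅ limit G) := by
  have := Elem.isRightKanExtension_of_isLimit_fiberFan hε
  exact ⟨hasLimit_iff_of_isRightKanExtension G ε, ⟨(G.limitIsoOfIsRightKanExtension ε).symm⟩⟩

theorem stmt13 :
    (HasLimit F ↔ HasLimit (fiberProd X F)) ∧
    Nonempty (limit F ≅ limit (fiberProd X F)) := by
  have ⟨hasLimit_iff, limitIso⟩ :=
    stmt13_general (fiberProdCounit X F) (isLimitFiberFanFiberProdCounit X F)
  exact ⟨hasLimit_iff, limitIso⟩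
end
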